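/- Let k be a field, d ≥ 1, and S = k[x_0, x_1, …, x_{d+1}]/(x_1²), with x̄_i the image of x_i, graded by total degree. For n ≥ 1 let J_n be the homogeneous ideal (x̄_0^n, x̄_1 x̄_0^{n−σ(n)}) of S, and J_0 = S. Then (i) J_m J_n ⊆ J_{m+n} for all m, n ≥ 0, and (ii) for each n ≥ 1 the degree-2n homogeneous component of J_n has k-dimension equal to C(d+n, d) + C(d+n+σ(n)−1, d), with k-basis consisting of x̄_0^n · M and x̄_1 x̄_0^{n−σ(n)} · M', where M ranges over all monomials of degree n and M' over all monomials of degree n+σ(n)−1 in the d+1 variables x̄_0, x̄_2, …, x̄_{d+1}. -/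

import Mathlib

set_option synthInstance.maxHeartbeats 1000000
set_option maxHeartbeats 1000000

/-!
Cutkosky, "The asymptotic growth of graded linear series on arbitrary projective schemes",
the algebraic core of Example `\ref{Example25}`.

Fix a sequence of positive integers `(i_j)_{j ≥ 1}` with `i 1 = 2`, each `i (j+1)` even and
`i (j+1) > 2^j * i j`, and define `σ` by `σ 1 = 1`, `σ n = i j / 2` for `i j ≤ n < i (j+1)`.

Let `k` be a field, `d ≥ 1`, and `S = k[x₀, x₁, …, x_{d+1}]/(x₁²)`, graded by total degree.
For `n ≥ 1` let `J n = (x̄₀ⁿ, x̄₁ x̄₀^{n - σ n})` and `J 0 = S`.  Then: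
(i)  `J m * J n ⊆ J (m+n)` for all `m, n ≥ 0`;
(ii) for each `n ≥ 1` the degree-`2n` homogeneous component of `J n` has `k`-basis
     consisting of `x̄₀ⁿ · M` and `x̄₁ x̄₀^{n - σ n} · M'`, where `M` ranges over all
     monomials of degree `n` and `M'` over all monomials of degree `n + σ n - 1` in the
     `d+1` variables `x̄₀, x̄₂, …, x̄_{d+1}`; in particular its `k`-dimension equals
     `C(d+n, d) + C(d+n+σ(n)-1, d)`.
-/

noncomputable section

/-- `S = k[x₀, …, x_{d+1}]/(x₁²)`. -/
abbrev DoubleHyperplaneRing (k : Type) [Field k] (d : ℕ) : Type :=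
  MvPolynomial (Fin (d + 2)) k ⧸
    Ideal.span {(MvPolynomial.X 1 : MvPolynomial (Fin (d + 2)) k) ^ 2}

/-- The quotient map `k[x₀, …, x_{d+1}] → S`, `x_i ↦ x̄_i`. -/
abbrev dhQuot (k : Type) [Field k] (d : ℕ) :
    MvPolynomial (Fin (d + 2)) k →ₐ[k] DoubleHyperplaneRing k d :=
  Ideal.Quotient.mkₐ k _

/-- The graded family of ideals `J n = (x̄₀ⁿ, x̄₁ x̄₀^{n - σ n})` (with `J 0 = S`). -/
def dhIdeal (k : Type) [Field k] (d : ℕ) (σ : ℕ → ℕ) (n : ℕ) :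
    Ideal (DoubleHyperplaneRing k d) :=
  if n = 0 then ⊤ else
    Ideal.span {dhQuot k d (MvPolynomial.X 0 ^ n),
      dhQuot k d (MvPolynomial.X 1 * MvPolynomial.X 0 ^ (n - σ n))}

/-- Index type for the monomials of degree `m` in the `d+1` variables
`x₀, x₂, …, x_{d+1}` (the variable `x₁` is omitted). -/
def dhMonIdx (d : ℕ) (m : ℕ) : Type :=
  {v : Fin (d + 2) →₀ ℕ // v 1 = 0 ∧ (v.sum fun _ e => e) = m}

/-- The claimed basis of the degree-`2n` homogeneous component of `J n`:
the elements `x̄₀ⁿ · M` for `M` a monomial of degree `n`, and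
`x̄₁ x̄₀^{n-σ n} · M'` for `M'` a monomial of degree `n + σ n - 1`,
in the variables `x₀, x₂, …, x_{d+1}`. -/
def dhBasisFamily (k : Type) [Field k] (d : ℕ) (σ : ℕ → ℕ) (n : ℕ) :
    dhMonIdx d n ⊕ dhMonIdx d (n + σ n - 1) → DoubleHyperplaneRing k d :=
  Sum.elim
    (fun v => dhQuot k d (MvPolynomial.X 0 ^ n * MvPolynomial.monomial v.1 1))
    (fun v => dhQuot k d
      (MvPolynomial.X 1 * MvPolynomial.X 0 ^ (n - σ n) * MvPolynomial.monomial v.1 1))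

/-- The degree-`2n` homogeneous component of the ideal `J n`: the intersection of `J n`
with the image in `S` of the space of homogeneous polynomials of degree `2n`. -/
def dhComponent (k : Type) [Field k] (d : ℕ) (σ : ℕ → ℕ) (n : ℕ) :
    Submodule k (DoubleHyperplaneRing k d) :=
  Submodule.restrictScalars k (dhIdeal k d σ n) ⊓
    Submodule.map (dhQuot k d).toLinearMap
      (MvPolynomial.homogeneousSubmodule (Fin (d + 2)) k (2 * n))

/-!
Every subspace of `S` occurring in the theorem is the image of a span of monomials, and the ideal
`(x₁²)` is itself spanned by monomials; so intersections and quotients can be computed on sets of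
exponent vectors.  The degree-`2n` monomials of `(x₀ⁿ, x₁ x₀^{n - σ n})` that survive modulo `x₁²`
are exactly the translates by `x₀ⁿ` (those with `x₁`-exponent `0`) and by `x₁ x₀^{n - σ n}` (those
with `x₁`-exponent `1`) of monomials free of `x₁`.  The inclusion `J m * J n ⊆ J (m + n)` holds on
generators because `σ` is monotone, the product of the two nilpotent generators being `0`.
-/

section MonomialSpans

open MvPolynomial

variable {τ R S M : Type*}

section Semiring

variable [CommSemiring R]

lemma restrictSupport_inter (T U : Set (τ →₀ ℕ)) :
    restrictSupport R (T ∩ U) = restrictSupport R T ⊓ restrictSupport R U := by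
  ext p
  simp only [mem_restrictSupport_iff, Submodule.mem_inf, Set.subset_inter_iff]

lemma restrictSupport_union (T U : Set (τ →₀ ℕ)) :
    restrictSupport R (T ∪ U) = restrictSupport R T ⊔ restrictSupport R U := by
  simp only [restrictSupport_eq_span, Set.image_union, Submodule.span_union]

lemma disjoint_restrictSupport {T U : Set (τ →₀ ℕ)} (h : Disjoint T U) :
    Disjoint (restrictSupport R T) (restrictSupport R U) := by
  rw [disjoint_iff, ← restrictSupport_inter, h.inter_eq, restrictSupport_eq_span,
    Set.image_empty, Submodule.span_empty]

lemma restrictScalars_span_monomial_image (A : Set (τ →₀ ℕ)) :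
    (Ideal.span ((monomial · (1 : R)) '' A)).restrictScalars R =
      restrictSupport R (upperClosure A) := by
  ext p
  simp only [Submodule.restrictScalars_mem, mem_ideal_span_monomial_image,
    mem_restrictSupport_iff, Set.subset_def, SetLike.mem_coe, mem_upperClosure]

lemma homogeneousSubmodule_eq_restrictSupport (n : ℕ) :
    homogeneousSubmodule τ R n = restrictSupport R {u | u.degree = n} :=
  homogeneousSubmodule_eq_finsupp_supported τ R n

lemma map_restrictSupport_of_le_ker [AddCommMonoid M] [Module R M]
    (f : MvPolynomial τ R →ₗ[R] M) {U : Set (τ →₀ ℕ)} (hU : restrictSupport R U ≤ f.ker)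
    (T : Set (τ →₀ ℕ)) :
    (restrictSupport R T).map f = Submodule.span R ((fun u => f (monomial u 1)) '' (T \ U)) := by
  have map_inter : (restrictSupport R (T ∩ U)).map f = ⊥ :=
    f.le_ker_iff_map.1 ((restrictSupport_mono R Set.inter_subset_right).trans hU)
  rw [← Set.inter_union_sdiff T U, restrictSupport_union, Submodule.map_sup, map_inter, bot_sup_eq,
    restrictSupport_eq_span, Submodule.map_span, Set.image_image, Set.inter_union_sdiff]

end Semiring

section Ring

variable [CommRing R]

lemma linearIndependent_map_monomial [AddCommGroup M] [Module R M]
    (f : MvPolynomial τ R →ₗ[R] M) {U : Set (τ →₀ ℕ)} (hU : f.ker ≤ restrictSupport R U)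
    {ι : Type*} {e : ι → τ →₀ ℕ} (he : Function.Injective e) (heU : Disjoint (Set.range e) U) :
    LinearIndependent R fun x => f (monomial (e x) 1) := by
  have indep : LinearIndependent R fun x => monomial (e x) (1 : R) := by
    simpa only [Function.comp_def, coe_basisMonomials] using
      (basisMonomials τ R).linearIndependent.comp e he
  refine indep.map (f := f) (Disjoint.mono_right hU ?_)
  rw [Set.range_comp' (fun u => monomial u (1 : R)) e, ← restrictSupport_eq_span]
  exact disjoint_restrictSupport heU

theorem map_ideal_inf_map_restrictSupport [CommRing S] [Algebra R S]
    {f : MvPolynomial τ R →ₐ[R] S} (hf : Function.Surjective f) {U V : Set (τ →₀ ℕ)}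
    (hU : f.toLinearMap.ker = restrictSupport R U) {J : Ideal (MvPolynomial τ R)}
    (hJ : J.restrictScalars R = restrictSupport R V) (D : Set (τ →₀ ℕ)) :
    (J.map f).restrictScalars R ⊓ (restrictSupport R D).map f.toLinearMap =
      Submodule.span R ((fun u => f (monomial u 1)) '' ((D ∩ V) \ U)) := by
  have comap_map : ((J.map f).restrictScalars R).comap f.toLinearMap = restrictSupport R (V ∪ U) :=
    calc ((J.map f).restrictScalars R).comap f.toLinearMap
        = (J ⊔ RingHom.ker f).restrictScalars R := by
          rw [← Ideal.comap_map_of_surjective' f hf]; rfl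
      _ = J.restrictScalars R ⊔ f.toLinearMap.ker := Submodule.restrictScalars_sup ..
      _ = restrictSupport R (V ∪ U) := by rw [hJ, hU, restrictSupport_union]
  rw [inf_comm, Submodule.map_inf_eq_map_inf_comap, comap_map, ← restrictSupport_inter,
    map_restrictSupport_of_le_ker f.toLinearMap hU.ge, Set.inter_union_distrib_left,
    Set.union_sdiff_distrib, Set.sdiff_eq_empty.2 Set.inter_subset_right, Set.union_empty]
  rfl

end Ring

end MonomialSpans

section Exponents

lemma single_add_single_le_iff {α : Type*} {i j : α} (hij : i ≠ j) {a b : ℕ} {u : α →₀ ℕ} :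
    Finsupp.single i a + Finsupp.single j b ≤ u ↔ a ≤ u i ∧ b ≤ u j := by
  classical
  refine ⟨fun h => ⟨by simpa [hij.symm] using h i, by simpa [hij] using h j⟩, fun ⟨ha, hb⟩ l => ?_⟩
  by_cases hi : l = i <;> by_cases hj : l = j <;> simp_all [Finsupp.single_apply, eq_comm]

lemma coe_finsuppAntidiag_univ_erase {α : Type*} [Fintype α] [DecidableEq α] (a : α) (m : ℕ) :
    ((Finset.univ.erase a).finsuppAntidiag m : Set (α →₀ ℕ)) =
      {v | v a = 0 ∧ (v.sum fun _ e => e) = m} := by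
  ext v
  have support_subset : v.support ⊆ Finset.univ.erase a ↔ v a = 0 := by
    simp [Finset.subset_erase]
  rw [SetLike.mem_coe, Finset.mem_finsuppAntidiag', support_subset, and_comm, Set.mem_ofPred_eq]

instance finite_dhMonIdx (d m : ℕ) : Finite (dhMonIdx d m) :=
  (coe_finsuppAntidiag_univ_erase (1 : Fin (d + 2)) m ▸ Finset.finite_toSet _ :
    {v : Fin (d + 2) →₀ ℕ | v 1 = 0 ∧ (v.sum fun _ e => e) = m}.Finite)

lemma card_dhMonIdx (d m : ℕ) : Nat.card (dhMonIdx d m) = (d + m).choose d := by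
  change Nat.card {v : Fin (d + 2) →₀ ℕ | v 1 = 0 ∧ (v.sum fun _ e => e) = m} = _
  rw [← coe_finsuppAntidiag_univ_erase, Nat.card_coe_set_eq, Set.ncard_coe_finset,
    Finset.card_finsuppAntidiag_nat_eq_choose, Finset.card_erase_of_mem (Finset.mem_univ _),
    Finset.card_univ, Fintype.card_fin, Nat.choose_symm_add]
  congr 1
  omega

lemma range_add_dhMonIdx {d : ℕ} (w : Fin (d + 2) →₀ ℕ) (m : ℕ) :
    Set.range (fun v : dhMonIdx d m => w + v.1) =
      {u | w ≤ u ∧ u 1 = w 1 ∧ u.degree = w.degree + m} := by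
  ext u
  constructor
  · rintro ⟨v, rfl⟩
    exact ⟨le_self_add, by simp [v.2.1], (map_add ..).trans (congrArg _ v.2.2)⟩
  · rintro ⟨hle, hone, hdeg⟩
    obtain ⟨v, rfl⟩ := exists_add_of_le hle
    exact ⟨⟨v, by simpa using hone, add_left_cancel ((map_add ..).symm.trans hdeg)⟩, rfl⟩

/-- The exponent vectors of the monomials `x₀ⁿ · M` and `x₁ x₀^{n - s} · M'` underlying
`dhBasisFamily`, where `s` stands for `σ n`. -/
def dhExponent (d s n : ℕ) : dhMonIdx d n ⊕ dhMonIdx d (n + s - 1) → Fin (d + 2) →₀ ℕ :=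
  Sum.elim (fun v => Finsupp.single 0 n + v.1)
    (fun v => Finsupp.single 1 1 + Finsupp.single 0 (n - s) + v.1)

variable {d : ℕ} (s n : ℕ)

lemma dhExponent_inl_one (v : dhMonIdx d n) : dhExponent d s n (Sum.inl v) 1 = 0 := by
  simp [dhExponent, v.2.1]

lemma dhExponent_inr_one (v : dhMonIdx d (n + s - 1)) : dhExponent d s n (Sum.inr v) 1 = 1 := by
  simp [dhExponent, v.2.1]

lemma dhExponent_injective : Function.Injective (dhExponent d s n) := by
  refine Function.Injective.sumElim ((add_right_injective _).comp Subtype.val_injective)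
    ((add_right_injective _).comp Subtype.val_injective) fun v w h => ?_
  have := DFunLike.congr_fun h 1
  exact zero_ne_one <|
    (dhExponent_inl_one s n v).symm.trans (this.trans (dhExponent_inr_one s n w))

lemma disjoint_range_dhExponent :
    Disjoint (Set.range (dhExponent d s n)) (Set.Ici (Finsupp.single 1 2)) := by
  rw [Set.disjoint_left]
  rintro _ ⟨v | v, rfl⟩ <;>
    simp [Finsupp.single_le_iff, dhExponent_inl_one, dhExponent_inr_one]

variable {s n}

lemma range_dhExponent (hs : 1 ≤ s) (hsn : s ≤ n) :
    Set.range (dhExponent d s n) =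
      ({u | u.degree = 2 * n} ∩ (Set.Ici (Finsupp.single 0 n) ∪
        Set.Ici (Finsupp.single 1 1 + Finsupp.single 0 (n - s)))) \
        Set.Ici (Finsupp.single 1 2) := by
  rw [dhExponent, Set.Sum.elim_range, range_add_dhMonIdx, range_add_dhMonIdx]
  ext u
  simp only [Set.mem_union, Set.mem_sdiff, Set.mem_inter_iff, Set.mem_ofPred_eq, Set.mem_Ici,
    Finsupp.single_le_iff, single_add_single_le_iff (one_ne_zero : (1 : Fin (d + 2)) ≠ 0),
    map_add, Finsupp.degree_single, Finsupp.add_apply, Finsupp.single_eq_same,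
    Finsupp.single_eq_of_ne (one_ne_zero : (1 : Fin (d + 2)) ≠ 0)]
  omega

end Exponents

section Component

open MvPolynomial

variable (k : Type) [Field k] (d : ℕ) (σ : ℕ → ℕ)

lemma ker_dhQuot :
    (dhQuot k d).toLinearMap.ker = restrictSupport k (Set.Ici (Finsupp.single 1 2)) := by
  calc (dhQuot k d).toLinearMap.ker
      = (RingHom.ker (dhQuot k d)).restrictScalars k := rfl
    _ = (Ideal.span ((monomial · (1 : k)) '' {Finsupp.single 1 2})).restrictScalars k := by
      rw [Set.image_singleton, ← X_pow_eq_monomial]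
      exact congrArg _ (Ideal.Quotient.mkₐ_ker k _)
    _ = restrictSupport k (Set.Ici (Finsupp.single 1 2)) := by
      rw [restrictScalars_span_monomial_image, upperClosure_singleton, UpperSet.coe_Ici]

lemma dhBasisFamily_eq_map_monomial (n : ℕ) :
    dhBasisFamily k d σ n = fun x => dhQuot k d (monomial (dhExponent d (σ n) n x) 1) := by
  funext x
  rcases x with v | v <;>
    simp only [dhBasisFamily, dhExponent, Sum.elim_inl, Sum.elim_inr, add_assoc, mul_assoc,
      monomial_single_add, pow_one]

lemma linearIndependent_dhBasisFamily (n : ℕ) : LinearIndependent k (dhBasisFamily k d σ n) := by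
  rw [dhBasisFamily_eq_map_monomial]
  exact linearIndependent_map_monomial (dhQuot k d).toLinearMap (ker_dhQuot k d).le
    (dhExponent_injective (σ n) n) (disjoint_range_dhExponent (σ n) n)

variable {σ} {n : ℕ}

lemma dhIdeal_eq_map_span_monomial (hn : 1 ≤ n) :
    dhIdeal k d σ n = (Ideal.span ((monomial · (1 : k)) ''
      {Finsupp.single 0 n, Finsupp.single 1 1 + Finsupp.single 0 (n - σ n)})).map (dhQuot k d) := by
  simp only [dhIdeal, if_neg (Nat.one_le_iff_ne_zero.1 hn), Ideal.map_span, Set.image_pair,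
    monomial_single_add, X_pow_eq_monomial, pow_one]

theorem span_dhBasisFamily (hn : 1 ≤ n) (hσ : σ n ∈ Set.Icc 1 n) :
    Submodule.span k (Set.range (dhBasisFamily k d σ n)) = dhComponent k d σ n := by
  have exponents :
      (upperClosure ({Finsupp.single 0 n, Finsupp.single 1 1 + Finsupp.single 0 (n - σ n)} :
        Set (Fin (d + 2) →₀ ℕ)) : Set (Fin (d + 2) →₀ ℕ)) =
      Set.Ici (Finsupp.single 0 n) ∪ Set.Ici (Finsupp.single 1 1 + Finsupp.single 0 (n - σ n)) := by
    rw [coe_upperClosure, Set.biUnion_pair]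
  rw [dhComponent, dhIdeal_eq_map_span_monomial k d hn, homogeneousSubmodule_eq_restrictSupport,
    map_ideal_inf_map_restrictSupport (Ideal.Quotient.mkₐ_surjective k _) (ker_dhQuot k d)
      (restrictScalars_span_monomial_image _), exponents, ← range_dhExponent hσ.1 hσ.2,
    dhBasisFamily_eq_map_monomial, ← Set.range_comp]
  rfl

theorem finrank_dhComponent (hn : 1 ≤ n) (hσ : σ n ∈ Set.Icc 1 n) :
    Module.finrank k (dhComponent k d σ n) =
      (d + n).choose d + (d + n + σ n - 1).choose d := by
  rw [← span_dhBasisFamily k d hn hσ,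
    Module.finrank_eq_nat_card_basis (Module.Basis.span (linearIndependent_dhBasisFamily k d σ n)),
    Nat.card_sum, card_dhMonIdx, card_dhMonIdx, Nat.add_assoc d n,
    Nat.add_sub_assoc (Nat.le_add_right_of_le hn)]

end Component

section Multiplication

lemma span_pair_mul_span_pair_le {A : Type*} [CommSemiring A] {x y : A} (hy : y * y = 0)
    {m n p q r : ℕ} (hmq : r ≤ m + q) (hpn : r ≤ p + n) :
    Ideal.span {x ^ m, y * x ^ p} * Ideal.span {x ^ n, y * x ^ q} ≤
      Ideal.span {x ^ (m + n), y * x ^ r} := by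
  have mem_of_le {l : ℕ} (hl : r ≤ l) : y * x ^ l ∈ Ideal.span {x ^ (m + n), y * x ^ r} :=
    Ideal.mem_of_dvd _ (mul_dvd_mul_left y (pow_dvd_pow x hl)) (Ideal.subset_span (by simp))
  rw [Ideal.span_pair_mul_span_pair, Ideal.span_le]
  rintro _ (rfl | rfl | rfl | rfl)
  · exact Ideal.subset_span (by simp [pow_add])
  · rw [mul_left_comm, ← pow_add]
    exact mem_of_le hmq
  · rw [mul_assoc, ← pow_add]
    exact mem_of_le hpn
  · rw [mul_mul_mul_comm, hy, zero_mul]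
    exact Ideal.zero_mem _

theorem dhIdeal_mul_le (k : Type) [Field k] (d : ℕ) {σ : ℕ → ℕ} (hσ : MonotoneOn σ (Set.Ici 1))
    (m n : ℕ) : dhIdeal k d σ m * dhIdeal k d σ n ≤ dhIdeal k d σ (m + n) := by
  obtain rfl | hm := Nat.eq_zero_or_pos m
  · rw [zero_add]
    exact Ideal.mul_le_right
  obtain rfl | hn := Nat.eq_zero_or_pos n
  · exact Ideal.mul_le_left
  have sq_zero : dhQuot k d (MvPolynomial.X 1) * dhQuot k d (MvPolynomial.X 1) = 0 := by
    rw [← map_mul, ← pow_two]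
    exact Ideal.Quotient.eq_zero_iff_mem.2 (Ideal.mem_span_singleton_self _)
  have hσm : σ m ≤ σ (m + n) := hσ hm (Nat.le_add_right_of_le hm) (Nat.le_add_right m n)
  have hσn : σ n ≤ σ (m + n) := hσ hn (Nat.le_add_right_of_le hm) (Nat.le_add_left n m)
  simp only [dhIdeal, hm.ne', hn.ne', (Nat.add_pos_left hm n).ne', if_false, map_mul, map_pow]
  exact span_pair_mul_span_pair_le sq_zero (by omega) (by omega)

end Multiplication

theorem double_hyperplane_ideal_family_general {σ : ℕ → ℕ} (hσ : ∀ n, 1 ≤ n → σ n ∈ Set.Icc 1 n)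
    (hσ_mono : MonotoneOn σ (Set.Ici 1)) (k : Type) [Field k] (d : ℕ) :
    (∀ m n : ℕ, dhIdeal k d σ m * dhIdeal k d σ n ≤ dhIdeal k d σ (m + n)) ∧
    (∀ n : ℕ, 1 ≤ n →
      LinearIndependent k (dhBasisFamily k d σ n) ∧
      Submodule.span k (Set.range (dhBasisFamily k d σ n)) = dhComponent k d σ n ∧
      Module.finrank k (dhComponent k d σ n) =
        (d + n).choose d + (d + n + σ n - 1).choose d) :=
  ⟨dhIdeal_mul_le k d hσ_mono, fun n hn => ⟨linearIndependent_dhBasisFamily k d σ n,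
    span_dhBasisFamily k d hn (hσ n hn), finrank_dhComponent k d hn (hσ n hn)⟩⟩

section HalvedBlocks

variable {i σ : ℕ → ℕ}

lemma strictMonoOn_of_two_pow_mul_lt (higrow : ∀ j, 1 ≤ j → 2 ^ j * i j < i (j + 1)) :
    StrictMonoOn i (Set.Ici 1) :=
  strictMonoOn_of_lt_add_one Set.ordConnected_Ici fun j _ hj _ =>
    (Nat.le_mul_of_pos_left (i j) (Nat.two_pow_pos j)).trans_lt (higrow j hj)

lemma exists_mem_Ico_succ_of_strictMonoOn {f : ℕ → ℕ} {a n : ℕ}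
    (hf : StrictMonoOn f (Set.Ici a)) (hn : f a ≤ n) :
    ∃ j, a ≤ j ∧ n ∈ Set.Ico (f j) (f (j + 1)) := by
  have unbounded : ¬BddAbove (f '' Set.Ici a) :=
    ((Set.Ici_infinite a).image hf.injOn).not_bddAbove
  have blocks := biUnion_Ici_Ico_map_succ
    (fun j hj => hf.monotoneOn Set.self_mem_Ici hj hj) unbounded
  simpa only [Set.mem_iUnion, Set.mem_Ici, exists_prop, Order.succ_eq_add_one] using blocks.ge hn

variable (hi : StrictMonoOn i (Set.Ici 1)) (hi1 : i 1 = 2) (hσ1 : σ 1 = 1)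
  (hσ : ∀ j n, 1 ≤ j → i j ≤ n → n < i (j + 1) → σ n = i j / 2)

include hi hi1 hσ1 hσ

lemma mem_Icc_of_eq_half_on_blocks (n : ℕ) (hn : 1 ≤ n) : σ n ∈ Set.Icc 1 n := by
  obtain rfl | hn : n = 1 ∨ i 1 ≤ n := by omega
  · simp [hσ1]
  · obtain ⟨j, hj, hle, hlt⟩ := exists_mem_Ico_succ_of_strictMonoOn hi hn
    have : i 1 ≤ i j := hi.monotoneOn Set.self_mem_Ici hj hj
    rw [hσ j n hj hle hlt, Set.mem_Icc]
    omega

lemma monotoneOn_of_eq_half_on_blocks : MonotoneOn σ (Set.Ici 1) := by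
  intro m hm n hn hmn
  rw [Set.mem_Ici] at hm
  obtain rfl | hm : m = 1 ∨ i 1 ≤ m := by omega
  · rw [hσ1]
    exact (mem_Icc_of_eq_half_on_blocks hi hi1 hσ1 hσ n hn).1
  · obtain ⟨j, hj, hjle, hjlt⟩ := exists_mem_Ico_succ_of_strictMonoOn hi hm
    obtain ⟨l, hl, hlle, hllt⟩ := exists_mem_Ico_succ_of_strictMonoOn hi (hm.trans hmn)
    have hjl : j < l + 1 :=
      (hi.lt_iff_lt hj (Nat.le_add_left 1 l)).1 (hjle.trans_lt (hmn.trans_lt hllt))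
    rw [hσ j m hj hjle hjlt, hσ l n hl hlle hllt]
    exact Nat.div_le_div_right (hi.monotoneOn hj hl (Nat.le_of_lt_succ hjl))

end HalvedBlocks

theorem double_hyperplane_ideal_family (i σ : ℕ → ℕ)
    (hipos : ∀ j, 1 ≤ j → 0 < i j)
    (hi1 : i 1 = 2)
    (hieven : ∀ j, 1 ≤ j → Even (i (j + 1)))
    (higrow : ∀ j, 1 ≤ j → 2 ^ j * i j < i (j + 1))
    (hσ1 : σ 1 = 1)
    (hσ : ∀ j n, 1 ≤ j → i j ≤ n → n < i (j + 1) → σ n = i j / 2)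
    (k : Type) [Field k] (d : ℕ) (hd : 1 ≤ d) :
    (∀ m n : ℕ, dhIdeal k d σ m * dhIdeal k d σ n ≤ dhIdeal k d σ (m + n)) ∧
    (∀ n : ℕ, 1 ≤ n →
      LinearIndependent k (dhBasisFamily k d σ n) ∧
      Submodule.span k (Set.range (dhBasisFamily k d σ n)) = dhComponent k d σ n ∧
      Module.finrank k (dhComponent k d σ n) =
        (d + n).choose d + (d + n + σ n - 1).choose d) := by
  have hi := strictMonoOn_of_two_pow_mul_lt higrow
  exact double_hyperplane_ideal_family_general (mem_Icc_of_eq_half_on_blocks hi hi1 hσ1 hσ)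
    (monotoneOn_of_eq_half_on_blocks hi hi1 hσ1 hσ) k d

end
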